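/- Let I, k ∈ ℕ₊, let d ∈ ℕ with d ≥ 2, let j ∈ ℤ^d, and define 𝒩_{k,j:I} : ℝ^d → ℝ by 𝒩_{k,j:I}(x) := ∏_{i=1}^d 𝒩_I(2^k x_i − j_i). Then there exists a Res-KAN N̂_{k,j:I} : ℝ^d → ℝ with spline-order parameter I (whose coefficient matrices satisfy the sparsity rule for every α with ⌈α⌉ ≤ I), having width at most d+4, depth 2d−1, and at most d² + 35d − 36 nonzero parameters, such that N̂_{k,j:I}(x) = 𝒩_{k,j:I}(x) for every x ∈ ℝ^d. Moreover, the networks can be chosen so that all layer parameters other than the weight matrix and bias of the first affine map (at most 2d nonzero entries) are independent of k and j. -/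

import Mathlib

/-!
The network keeps every state in `d + 3` coordinates. The first layer writes the factors
`y i = 𝒩_I (2 ^ k * x i - j i)` into the coordinates `i < d`. The coordinates `0, d, d + 1, d + 2`
then serve as an accumulator: a state `h` encodes the partial product
`p = h 0 + h d - h (d + 1) - h (d + 2)`, which after the first layer is `y 0`.

A product layer `l` with `1 ≤ l < d` multiplies the partial product by `y l`. Since
`t² = ReLU(t)² + ReLU(-t)²`, polarization gives
`4 * p * y = ReLU(p + y)² + ReLU(-p - y)² - ReLU(p - y)² - ReLU(-p + y)²`
(`relu_polarization`), so four `ReLU²` neurons produce the next accumulator; its signed sum need not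
be formed explicitly, because it is absorbed in the affine map of the next layer. Skip connections
carry the factors still to be used. The product is complete after `d` layers, and the remaining
`d - 1` layers only copy the accumulator. The head takes the signed sum. This is `bsNet`, and
`bsNet_hidden` is the invariant.

The first layer has at most `3d` nonzero parameters, each product layer at most `d + 22`, each
copying layer and the head at most `4`, so the total is within the bound (`bsNet_nnz`). Only the
weights and biases of the first layer involve `k` and `j`.
-/

open MeasureTheory Filter Set
open scoped BigOperators ENNReal NNReal

noncomputable section

/-- ReLU activation. -/
def relu (t : ℝ) : ℝ := max t 0

/-- Cardinal B-spline of order `I` (with the indicator convention for `I = 0`). -/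
def cardBSpline (I : ℕ) (x : ℝ) : ℝ :=
  if I = 0 then (if 0 ≤ x ∧ x < 1 then 1 else 0)
  else ∑ j ∈ Finset.range (I + 2),
    ((-1 : ℝ) ^ j * ((I + 1).choose j : ℝ) / (Nat.factorial I : ℝ)) * (relu (x - j)) ^ I

/-- The dictionary `{𝒩_0, …, 𝒩_I, ReLU, ReLU²}` indexed by `Fin (I+3)`. -/
def kanBasis (I : ℕ) (i : Fin (I + 3)) : ℝ → ℝ :=
  if (i : ℕ) ≤ I then cardBSpline (i : ℕ)
  else if (i : ℕ) = I + 1 then relu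
  else fun t => (relu t) ^ 2

/-- A Res-KAN layer with spline-order parameter `I`. -/
structure ResKANLayer (I din dout : ℕ) where
  A : Matrix (Fin dout) (Fin din) ℝ
  b : Fin dout → ℝ
  G : Matrix (Fin dout) (Fin din) ℝ
  β : Matrix (Fin (I + 3)) (Fin dout) ℝ
  G_diag : ∀ (i : Fin dout) (j : Fin din), (i : ℕ) ≠ (j : ℕ) → G i j = 0

/-- The action of a Res-KAN layer: `x ↦ σ_β•(Ax + b) + Gx`. -/
def ResKANLayer.apply {I din dout : ℕ} (ℓ : ResKANLayer I din dout)
    (x : Fin din → ℝ) : Fin dout → ℝ := fun j =>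
  (∑ i : Fin (I + 3), ℓ.β i j * kanBasis I i ((ℓ.A.mulVec x + ℓ.b) j)) + ℓ.G.mulVec x j

/-- A residual Kolmogorov–Arnold network from `ℝ^d` to `ℝ^D` with `L` hidden layers. -/
structure ResKAN (I d D : ℕ) where
  L : ℕ
  dims : ℕ → ℕ
  dims_zero : dims 0 = d
  layers : ∀ l : ℕ, ResKANLayer I (dims l) (dims (l + 1))
  Ahead : Matrix (Fin D) (Fin (dims L)) ℝ
  bhead : Fin D → ℝ

/-- The hidden state `f^{(l)}`. -/
def ResKAN.hidden {I d D : ℕ} (net : ResKAN I d D) :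
    (l : ℕ) → (Fin d → ℝ) → Fin (net.dims l) → ℝ
  | 0 => fun x i => x (Fin.cast net.dims_zero i)
  | (l + 1) => fun x => (net.layers l).apply (net.hidden l x)

/-- Evaluation of a Res-KAN: `f̂ = A^{(L+1)} f^{(L)} + b^{(L+1)}`. -/
def ResKAN.eval {I d D : ℕ} (net : ResKAN I d D) (x : Fin d → ℝ) : Fin D → ℝ :=
  net.Ahead.mulVec (net.hidden net.L x) + net.bhead

/-- Depth of a Res-KAN: the number of hidden layers. -/
def ResKAN.depth {I d D : ℕ} (net : ResKAN I d D) : ℕ := net.L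

/-- Width of a Res-KAN: the maximum of the layer dimensions `d_1, …, d_L` and `d_{L+1} = D`. -/
def ResKAN.width {I d D : ℕ} (net : ResKAN I d D) : ℕ :=
  max ((Finset.range net.L).sup fun l => net.dims (l + 1)) D

/-- Number of nonzero entries of a real matrix. -/
def matNnz {m n : ℕ} (M : Matrix (Fin m) (Fin n) ℝ) : ℕ :=
  {p : Fin m × Fin n | M p.1 p.2 ≠ 0}.ncard

/-- Number of nonzero entries of a real vector. -/
def vecNnz {m : ℕ} (v : Fin m → ℝ) : ℕ := {i : Fin m | v i ≠ 0}.ncard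

/-- Number of nonzero parameters of a Res-KAN layer. -/
def ResKANLayer.nnz {I din dout : ℕ} (ℓ : ResKANLayer I din dout) : ℕ :=
  matNnz ℓ.A + vecNnz ℓ.b + matNnz ℓ.G + matNnz ℓ.β

/-- Number of nonzero parameters of a Res-KAN. -/
def ResKAN.nnz {I d D : ℕ} (net : ResKAN I d D) : ℕ :=
  (∑ l ∈ Finset.range net.L, (net.layers l).nnz) + matNnz net.Ahead + vecNnz net.bhead

/-- The sparsity rule for smoothness parameter `α`: the coefficients of the B-splines of
order `< ⌈α⌉` vanish. -/
def ResKANLayer.Sparsity {I din dout : ℕ} (ℓ : ResKANLayer I din dout) (α : ℝ) : Prop :=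
  ∀ (i : Fin (I + 3)) (j : Fin dout), (i : ℕ) ≤ I → (i : ℕ) < ⌈α⌉₊ → ℓ.β i j = 0

/-- The sparsity rule for a whole network. -/
def ResKAN.Sparsity {I d D : ℕ} (net : ResKAN I d D) (α : ℝ) : Prop :=
  ∀ l < net.L, (net.layers l).Sparsity α

/-- The class `Res-KAN_{L,W}^{I,α}(ℝ^d, ℝ)` of real-valued Res-KANs with `L` hidden layers
and width at most `W`, satisfying the sparsity rule for `α`. -/
def ResKANClass (I : ℕ) (α : ℝ) (L W d : ℕ) : Set ((Fin d → ℝ) → ℝ) :=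
  {f | ∃ net : ResKAN I d 1, net.L = L ∧ net.width ≤ W ∧ net.Sparsity α ∧
        ∀ x, f x = net.eval x 0}

end

/-! ### Layers described by functions on `ℕ` -/

/-- A Res-KAN layer whose entries are given by functions of natural-number indices, so that the
same formulas make sense for all input and output dimensions. `a` and `b` are the affine map,
`g` is the diagonal of `G`, and the neuron `j` carries the single dictionary element with index
`m`, with coefficient `s j`. -/
noncomputable def natLayer (I din dout : ℕ) (a : ℕ → ℕ → ℝ) (b g : ℕ → ℝ) (m : ℕ) (s : ℕ → ℝ) :
    ResKANLayer I din dout where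
  A := fun i j => a i j
  b := fun i => b i
  G := fun i j => if (i : ℕ) = j then g i else 0
  β := fun i j => if (i : ℕ) = m then s j else 0
  G_diag := fun _ _ h => if_neg h

theorem natLayer_apply (I din dout : ℕ) (a : ℕ → ℕ → ℝ) (b g : ℕ → ℝ) (m : ℕ) (s : ℕ → ℝ)
    (hm : m < I + 3) (x : Fin din → ℝ) (h : ℕ → ℝ) (hx : ∀ i, x i = h i) (j : Fin dout) :
    (natLayer I din dout a b g m s).apply x j =
      s j * kanBasis I ⟨m, hm⟩ (∑ i ∈ Finset.range din, a j i * h i + b j)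
        + (if (j : ℕ) < din then g j * h j else 0) := by
  unfold ResKANLayer.apply natLayer
  simp only [Matrix.mulVec, dotProduct, Pi.add_apply, hx]
  congr 1
  · rw [Finset.sum_eq_single (⟨m, hm⟩ : Fin (I + 3))]
    · simp only [if_true]
      rw [Fin.sum_univ_eq_sum_range (fun i => a j i * h i)]
    · intro i _ hi
      have : (i : ℕ) ≠ m := fun e => hi (Fin.ext e)
      simp [this]
    · simp
  · rw [Fin.sum_univ_eq_sum_range (fun i => (if (j : ℕ) = i then g j else 0) * h i)]
    simp [ite_mul]

theorem matNnz_le {m n : ℕ} (M : Matrix (Fin m) (Fin n) ℝ) (T : Finset (ℕ × ℕ))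
    (h : ∀ i j, M i j ≠ 0 → ((i : ℕ), (j : ℕ)) ∈ T) : matNnz M ≤ T.card := by
  unfold matNnz
  rw [← Set.ncard_coe_finset]
  refine Set.ncard_le_ncard_of_injOn (fun p => ((p.1 : ℕ), (p.2 : ℕ))) ?_ ?_ T.finite_toSet
  · rintro ⟨i, j⟩ hij
    exact h i j hij
  · rintro ⟨i, j⟩ _ ⟨i', j'⟩ _ e
    simp only [Prod.mk.injEq] at e
    exact Prod.ext (Fin.ext e.1) (Fin.ext e.2)

theorem vecNnz_le {m : ℕ} (v : Fin m → ℝ) (T : Finset ℕ)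
    (h : ∀ i, v i ≠ 0 → (i : ℕ) ∈ T) : vecNnz v ≤ T.card := by
  unfold vecNnz
  rw [← Set.ncard_coe_finset]
  refine Set.ncard_le_ncard_of_injOn (fun p => (p : ℕ)) ?_ ?_ T.finite_toSet
  · intro i hi
    exact h i hi
  · intro i _ i' _ e
    exact Fin.ext e

theorem kanBasis_spline (I : ℕ) (h : I < I + 3) : kanBasis I ⟨I, h⟩ = cardBSpline I := by
  simp [kanBasis]

theorem kanBasis_sq (I : ℕ) (h : I + 2 < I + 3) (t : ℝ) :
    kanBasis I ⟨I + 2, h⟩ t = relu t ^ 2 := by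
  simp [kanBasis]

theorem relu_sq_add (t : ℝ) : relu t ^ 2 + relu (-t) ^ 2 = t ^ 2 := by
  unfold relu
  rcases le_total 0 t with h | h
  · rw [max_eq_left h, max_eq_right (by linarith)]; ring
  · rw [max_eq_right h, max_eq_left (by linarith)]; ring

/-- The polarization identity in terms of squared ReLUs; no sign condition is needed. -/
theorem relu_polarization (p y : ℝ) :
    1 / 4 * relu (p + y) ^ 2 + 1 / 4 * relu (-p - y) ^ 2 - 1 / 4 * relu (p - y) ^ 2
      - 1 / 4 * relu (-p + y) ^ 2 = p * y := by
  have h1 := relu_sq_add (p + y)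
  have h2 := relu_sq_add (p - y)
  rw [show -(p + y) = -p - y by ring] at h1
  rw [show -(p - y) = -p + y by ring] at h2
  linear_combination (1 / 4) * h1 - (1 / 4) * h2

/-! ### The network -/

/-- Layer dimensions: `d` inputs, then constant width `d + 3`. -/
def bsDims (d : ℕ) (l : ℕ) : ℕ := if l = 0 then d else d + 3

/-- The four accumulator coordinates of a hidden state. -/
def accSet (d : ℕ) : Finset ℕ := {0, d, d + 1, d + 2}

/-- Weights of the linear functional by which the accumulator encodes the current partial
product. -/
noncomputable def accW (d j : ℕ) : ℝ :=
  if j = 0 ∨ j = d then 1 else if j = d + 1 ∨ j = d + 2 then -1 else 0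

/-- Coefficient of the partial product `p` in the four arguments `p + y, -p - y, p - y, -p + y`. -/
noncomputable def rowP (d i : ℕ) : ℝ :=
  if i = 0 ∨ i = d + 1 then 1 else if i = d ∨ i = d + 2 then -1 else 0

/-- Coefficient of the new factor `y` in the four arguments `p + y, -p - y, p - y, -p + y`. -/
noncomputable def rowY (d i : ℕ) : ℝ :=
  if i = 0 ∨ i = d + 2 then 1 else if i = d ∨ i = d + 1 then -1 else 0

/-- Weight matrix of layer `l`, where `w` is the dilation used in the first layer. -/
noncomputable def bsA (d : ℕ) (w : ℝ) (l i j : ℕ) : ℝ :=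
  if l = 0 then (if i = j then w else 0)
  else if l < d then rowP d i * accW d j + rowY d i * (if j = l then 1 else 0)
  else 0

/-- Bias of layer `l`, where `c` is the shift used in the first layer. -/
noncomputable def bsB (d : ℕ) (c : Fin d → ℝ) (l i : ℕ) : ℝ :=
  if l = 0 then (if h : i < d then c ⟨i, h⟩ else 0) else 0

/-- Skip connections of layer `l`: a product layer keeps the factors not yet used, an idle layer
keeps the accumulator. -/
noncomputable def bsG (d l i : ℕ) : ℝ :=
  if l = 0 then 0
  else if l < d then (if l < i ∧ i < d then 1 else 0)
  else (if i ∈ accSet d then 1 else 0)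

/-- Index of the dictionary element used by layer `l`: `𝒩_I` first, then `ReLU²`. -/
def bsM (I l : ℕ) : ℕ := if l = 0 then I else I + 2

/-- Coefficients of the dictionary element in layer `l`. -/
noncomputable def bsS (d l i : ℕ) : ℝ :=
  if l = 0 then (if i < d then 1 else 0)
  else if l < d then (if i ∈ accSet d then 1 / 4 else 0)
  else 0

/-- The network computing `∏ i, 𝒩_I (w * x i + c i)`. -/
noncomputable def bsNet (I d : ℕ) (w : ℝ) (c : Fin d → ℝ) : ResKAN I d 1 where
  L := 2 * d - 1
  dims := bsDims d
  dims_zero := rfl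
  layers := fun l => natLayer I (bsDims d l) (bsDims d (l + 1)) (bsA d w l) (bsB d c l)
    (bsG d l) (bsM I l) (bsS d l)
  Ahead := fun _ j => accW d j
  bhead := fun _ => 0

/-! ### Correctness -/

/-- The value encoded by the accumulator of a state. -/
def accVal (d : ℕ) (h : ℕ → ℝ) : ℝ := h 0 + h d - h (d + 1) - h (d + 2)

theorem sum_accW (d : ℕ) (hd : 2 ≤ d) (h : ℕ → ℝ) :
    ∑ j ∈ Finset.range (d + 3), accW d j * h j = accVal d h := by
  obtain ⟨e, rfl⟩ : ∃ e, d = e + 1 := ⟨d - 1, by omega⟩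
  rw [Finset.sum_range_succ, Finset.sum_range_succ, Finset.sum_range_succ,
    Finset.sum_range_succ', Finset.sum_eq_zero]
  · simp [accW, accVal]; ring
  · intro i hi
    rw [Finset.mem_range] at hi
    have h1 : i ≠ e := by omega
    have h2 : i ≠ e + 1 := by omega
    have h3 : i ≠ e + 2 := by omega
    simp [accW, h1, h2, h3]

/-- The factors `𝒩_I (w * x i + c i)`, extended by zero to all natural indices. -/
noncomputable def factor (I d : ℕ) (w : ℝ) (c x : Fin d → ℝ) (i : ℕ) : ℝ :=
  if h : i < d then cardBSpline I (w * x ⟨i, h⟩ + c ⟨i, h⟩) else 0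

/-- After `l + 1` layers the factors with index in `(l, d)` are still stored, and the accumulator
encodes the product of the first `l + 1` factors (of all of them once `d ≤ l + 1`). -/
theorem bsNet_hidden (I d : ℕ) (hd : 2 ≤ d) (w : ℝ) (c x : Fin d → ℝ) (l : ℕ) :
    ∃ h : ℕ → ℝ, (∀ i, (bsNet I d w c).hidden (l + 1) x i = h i) ∧
      (∀ i, l + 1 ≤ i → i < d → h i = factor I d w c x i) ∧
      accVal d h = ∏ i ∈ Finset.range (min (l + 1) d), factor I d w c x i := by
  induction l with
  | zero =>
    refine ⟨factor I d w c x, ?_, fun _ _ _ => rfl, ?_⟩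
    · intro i
      have hx : ∀ i, (bsNet I d w c).hidden 0 x i =
          (fun n => if h : n < d then x ⟨n, h⟩ else 0) (i : ℕ) := by
        intro i
        have : (i : ℕ) < d := i.2
        simp only [this, dif_pos]
        rfl
      have := natLayer_apply I (bsDims d 0) (bsDims d 1) (bsA d w 0) (bsB d c 0) (bsG d 0)
        (bsM I 0) (bsS d 0) (by simp [bsM]) ((bsNet I d w c).hidden 0 x)
        (fun n => if h : n < d then x ⟨n, h⟩ else 0) hx i
      refine this.trans ?_
      have e0 : bsDims d 0 = d := rfl
      have em : (⟨bsM I 0, by simp [bsM]⟩ : Fin (I + 3)) = ⟨I, by omega⟩ := by simp [bsM]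
      rw [em, kanBasis_spline, e0]
      by_cases hi : (i : ℕ) < d
      · rw [Finset.sum_eq_single (i : ℕ)]
        · simp [bsS, bsG, bsA, bsB, factor, hi]
        · intro j _ hj
          simp [bsA, hj.symm]
        · intro hj
          exact absurd (Finset.mem_range.2 hi) hj
      · simp [bsS, factor, hi]
    · have : min (0 + 1) d = 1 := by omega
      rw [this]
      simp [accVal, factor]
  | succ l ih =>
    obtain ⟨h, hx, hy, hp⟩ := ih
    have key : ∀ i, (bsNet I d w c).hidden (l + 1 + 1) x i =
        (fun n : ℕ => bsS d (l + 1) n * relu (∑ j ∈ Finset.range (d + 3),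
          bsA d w (l + 1) n j * h j) ^ 2 + bsG d (l + 1) n * h n) (i : ℕ) := by
      intro i
      have := natLayer_apply I (bsDims d (l + 1)) (bsDims d (l + 1 + 1)) (bsA d w (l + 1))
        (bsB d c (l + 1)) (bsG d (l + 1)) (bsM I (l + 1)) (bsS d (l + 1)) (by simp [bsM]) _ _ hx i
      refine this.trans ?_
      have e0 : bsDims d (l + 1) = d + 3 := rfl
      have em : (⟨bsM I (l + 1), by simp [bsM]⟩ : Fin (I + 3)) = ⟨I + 2, by omega⟩ := by
        simp [bsM]
      have hi : (i : ℕ) < d + 3 := i.2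
      rw [em, kanBasis_sq, e0, if_pos hi]
      simp [bsB]
    refine ⟨fun n : ℕ => bsS d (l + 1) n * relu (∑ j ∈ Finset.range (d + 3),
      bsA d w (l + 1) n j * h j) ^ 2 + bsG d (l + 1) n * h n, key, ?_, ?_⟩
    · intro i h1 h2
      have h3 : l + 1 < d := by omega
      have h4 : l + 1 < i := by omega
      have h5 : i ∉ accSet d := by simp [accSet]; omega
      simp [bsS, bsG, h2, h3, h4, h5, hy i (by omega) h2]
    · by_cases hl : l + 1 < d
      · have hsum : ∀ n, ∑ j ∈ Finset.range (d + 3), bsA d w (l + 1) n j * h j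
            = rowP d n * accVal d h + rowY d n * factor I d w c x (l + 1) := by
          intro n
          rw [← sum_accW d hd h, Finset.mul_sum, ← hy (l + 1) le_rfl hl]
          have : rowY d n * h (l + 1) =
              ∑ j ∈ Finset.range (d + 3), rowY d n * (if j = l + 1 then 1 else 0) * h j := by
            rw [Finset.sum_eq_single (l + 1)]
            · simp
            · intro j _ hj; simp [hj]
            · intro hj; exact absurd (Finset.mem_range.2 (by omega)) hj
          rw [this, ← Finset.sum_add_distrib]
          refine Finset.sum_congr rfl fun j _ => ?_
          simp only [bsA, Nat.succ_ne_zero, if_false, hl, if_true]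
          ring
        have hm : min (l + 1 + 1) d = l + 1 + 1 := by omega
        have hm' : min (l + 1) d = l + 1 := by omega
        rw [hm, Finset.prod_range_succ, ← hm', ← hp, hm']
        rw [← relu_polarization]
        have hd0 : d ≠ 0 := by omega
        simp only [hsum]
        generalize accVal d h = p
        generalize factor I d w c x (l + 1) = y
        simp [accVal, bsS, bsG, hl, accSet, rowP, rowY, hd0, sub_eq_add_neg]
      · have hm : min (l + 1 + 1) d = d := by omega
        have hm' : min (l + 1) d = d := by omega
        rw [hm'] at hp
        rw [hm, ← hp]
        simp [accVal, bsS, bsG, hl, accSet]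

theorem bsNet_eval (I d : ℕ) (hd : 2 ≤ d) (w : ℝ) (c x : Fin d → ℝ) :
    (bsNet I d w c).eval x 0 = ∏ i, cardBSpline I (w * x i + c i) := by
  obtain ⟨h, hx, -, hp⟩ := bsNet_hidden I d hd w c x (2 * d - 2)
  have hL : 2 * d - 2 + 1 = (bsNet I d w c).L := by
    show 2 * d - 2 + 1 = 2 * d - 1
    omega
  rw [hL] at hx
  have hdim : (bsNet I d w c).dims (bsNet I d w c).L = d + 3 := by
    rw [← hL]; rfl
  have h1 : (bsNet I d w c).eval x 0 =
      ∑ j : Fin ((bsNet I d w c).dims (bsNet I d w c).L), accW d j * h j := by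
    unfold ResKAN.eval
    simp only [Matrix.mulVec, dotProduct, Pi.add_apply, hx]
    exact add_zero _
  rw [h1, Fin.sum_univ_eq_sum_range (fun j => accW d j * h j), hdim, sum_accW d hd, hp,
    min_eq_right (by omega), ← Fin.prod_univ_eq_prod_range]
  refine Finset.prod_congr rfl fun i _ => ?_
  simp [factor]

/-! ### Parameter count -/

theorem accSet_card_le (d : ℕ) : (accSet d).card ≤ 4 := Finset.card_le_four

theorem bsNet_first (I d : ℕ) (w : ℝ) (c : Fin d → ℝ) :
    matNnz ((bsNet I d w c).layers 0).A + vecNnz ((bsNet I d w c).layers 0).b ≤ 2 * d := by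
  have h1 : matNnz ((bsNet I d w c).layers 0).A ≤ d := by
    refine (matNnz_le _ ((Finset.range d).image fun i => (i, i)) ?_).trans
      (Finset.card_image_le.trans (by simp))
    intro i j hij
    change bsA d w 0 i j ≠ 0 at hij
    have hj : (j : ℕ) < d := j.2
    have e : (i : ℕ) = j := by
      by_contra hne
      simp [bsA, hne] at hij
    rw [Finset.mem_image]
    exact ⟨j, Finset.mem_range.2 hj, by rw [e]⟩
  have h2 : vecNnz ((bsNet I d w c).layers 0).b ≤ d := by
    refine (vecNnz_le _ (Finset.range d) ?_).trans (by simp)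
    intro i hi
    change bsB d c 0 i ≠ 0 at hi
    rw [Finset.mem_range]
    by_contra hne
    simp [bsB, hne] at hi
  omega

theorem bsNet_nnz_zero (I d : ℕ) (w : ℝ) (c : Fin d → ℝ) :
    ((bsNet I d w c).layers 0).nnz ≤ 3 * d := by
  have h1 := bsNet_first I d w c
  have h2 : matNnz ((bsNet I d w c).layers 0).G ≤ 0 := by
    refine matNnz_le _ ∅ ?_
    intro i j hij
    change (if (i : ℕ) = j then bsG d 0 i else 0) ≠ 0 at hij
    simp [bsG] at hij
  have h3 : matNnz ((bsNet I d w c).layers 0).β ≤ d := by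
    refine (matNnz_le _ ({I} ×ˢ Finset.range d) ?_).trans (by simp)
    intro i j hij
    change (if (i : ℕ) = bsM I 0 then bsS d 0 j else 0) ≠ 0 at hij
    simp [bsS, bsM] at hij
    simpa [and_comm, eq_comm] using hij
  unfold ResKANLayer.nnz
  omega

theorem bsNet_b_zero (I d : ℕ) (w : ℝ) (c : Fin d → ℝ) (l : ℕ) (h0 : 1 ≤ l) :
    vecNnz ((bsNet I d w c).layers l).b ≤ 0 := by
  refine vecNnz_le _ ∅ ?_
  intro i hi
  change bsB d c l i ≠ 0 at hi
  have : l ≠ 0 := by omega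
  simp [bsB, this] at hi

theorem bsNet_nnz_prod (I d : ℕ) (w : ℝ) (c : Fin d → ℝ) (l : ℕ) (h0 : 1 ≤ l) (hl : l < d) :
    ((bsNet I d w c).layers l).nnz ≤ d + 22 := by
  have hl0 : l ≠ 0 := by omega
  have hS := accSet_card_le d
  have h1 : matNnz ((bsNet I d w c).layers l).A ≤ 20 := by
    refine (matNnz_le _ (accSet d ×ˢ insert l (accSet d)) ?_).trans ?_
    · intro i j hij
      change bsA d w l i j ≠ 0 at hij
      simp only [bsA, hl0, hl, if_true, if_false] at hij
      rw [Finset.mem_product]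
      constructor
      · by_contra hi
        simp only [accSet, Finset.mem_insert, Finset.mem_singleton, not_or] at hi
        obtain ⟨a1, a2, a3, a4⟩ := hi
        simp [rowP, rowY, a1, a2, a3, a4] at hij
      · by_contra hj
        simp only [accSet, Finset.mem_insert, Finset.mem_singleton, not_or] at hj
        obtain ⟨a0, a1, a2, a3, a4⟩ := hj
        simp [accW, a0, a1, a2, a3, a4] at hij
    · rw [Finset.card_product]
      have := Finset.card_insert_le l (accSet d)
      exact Nat.mul_le_mul hS (this.trans (Nat.succ_le_succ hS))
  have h2 : matNnz ((bsNet I d w c).layers l).G ≤ d - l - 1 := by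
    refine (matNnz_le _ ((Finset.Ioo l d).image fun i => (i, i)) ?_).trans
      (Finset.card_image_le.trans (by simp))
    intro i j hij
    change (if (i : ℕ) = j then bsG d l i else 0) ≠ 0 at hij
    simp only [bsG, hl0, hl, if_true, if_false, ne_eq, ite_eq_right_iff, Classical.not_imp] at hij
    rw [Finset.mem_image]
    exact ⟨i, Finset.mem_Ioo.2 hij.2.1, by rw [← hij.1]⟩
  have h3 : matNnz ((bsNet I d w c).layers l).β ≤ 4 := by
    refine (matNnz_le _ ({I + 2} ×ˢ accSet d) ?_).trans (by simpa using hS)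
    intro i j hij
    change (if (i : ℕ) = bsM I l then bsS d l j else 0) ≠ 0 at hij
    simp only [bsS, bsM, hl0, hl, if_true, if_false, ne_eq, ite_eq_right_iff,
      Classical.not_imp] at hij
    rw [Finset.mem_product]
    exact ⟨Finset.mem_singleton.2 hij.1, hij.2.1⟩
  have h4 := bsNet_b_zero I d w c l h0
  unfold ResKANLayer.nnz
  omega

theorem bsNet_nnz_idle (I d : ℕ) (w : ℝ) (c : Fin d → ℝ) (l : ℕ) (h0 : 1 ≤ l) (hl : d ≤ l) :
    ((bsNet I d w c).layers l).nnz ≤ 4 := by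
  have hl0 : l ≠ 0 := by omega
  have hl' : ¬ l < d := by omega
  have h1 : matNnz ((bsNet I d w c).layers l).A ≤ 0 := by
    refine matNnz_le _ ∅ ?_
    intro i j hij
    change bsA d w l i j ≠ 0 at hij
    simp [bsA, hl0, hl'] at hij
  have h2 : matNnz ((bsNet I d w c).layers l).G ≤ 4 := by
    refine (matNnz_le _ ((accSet d).image fun i => (i, i)) ?_).trans
      (Finset.card_image_le.trans (accSet_card_le d))
    intro i j hij
    change (if (i : ℕ) = j then bsG d l i else 0) ≠ 0 at hij
    simp only [bsG, hl0, hl', if_false, ne_eq, ite_eq_right_iff, Classical.not_imp] at hij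
    rw [Finset.mem_image]
    exact ⟨i, hij.2.1, by rw [← hij.1]⟩
  have h3 : matNnz ((bsNet I d w c).layers l).β ≤ 0 := by
    refine matNnz_le _ ∅ ?_
    intro i j hij
    change (if (i : ℕ) = bsM I l then bsS d l j else 0) ≠ 0 at hij
    simp [bsS, hl0, hl'] at hij
  have h4 := bsNet_b_zero I d w c l h0
  unfold ResKANLayer.nnz
  omega

/-- The layer bounds add up to `3d + (d-1)(d+22) + 4(d-1) + 4 = d² + 28d - 22`, which is at most
`d² + 35d - 36` exactly when `2 ≤ d`. -/
theorem bsNet_nnz (I d : ℕ) (hd : 2 ≤ d) (w : ℝ) (c : Fin d → ℝ) :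
    (bsNet I d w c).nnz ≤ d ^ 2 + 35 * d - 36 := by
  have hA : matNnz (bsNet I d w c).Ahead ≤ 4 := by
    refine (matNnz_le _ ({0} ×ˢ accSet d) ?_).trans (by simpa using accSet_card_le d)
    intro i j hij
    change accW d j ≠ 0 at hij
    rw [Finset.mem_product]
    refine ⟨by simp, ?_⟩
    by_contra hj
    simp only [accSet, Finset.mem_insert, Finset.mem_singleton, not_or] at hj
    obtain ⟨a1, a2, a3, a4⟩ := hj
    simp [accW, a1, a2, a3, a4] at hij
  have hb : vecNnz (bsNet I d w c).bhead ≤ 0 := by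
    refine vecNnz_le _ ∅ ?_
    intro i hi
    exact absurd rfl hi
  set f := fun l => ((bsNet I d w c).layers l).nnz with hf
  change ∑ l ∈ Finset.range (2 * d - 1), f l + matNnz (bsNet I d w c).Ahead
    + vecNnz (bsNet I d w c).bhead ≤ _
  have hsplit : ∑ l ∈ Finset.range (2 * d - 1), f l =
      f 0 + ∑ l ∈ Finset.Ico 1 d, f l + ∑ l ∈ Finset.Ico d (2 * d - 1), f l := by
    rw [Finset.range_eq_Ico, ← Finset.sum_Ico_consecutive f (Nat.zero_le d) (by omega),
      Finset.sum_eq_sum_Ico_succ_bot (by omega : 0 < d)]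
  have h1 : ∑ l ∈ Finset.Ico 1 d, f l ≤ (d - 1) * (d + 22) := by
    refine (Finset.sum_le_card_nsmul _ _ (d + 22) ?_).trans (by simp)
    intro l hl
    rw [Finset.mem_Ico] at hl
    exact bsNet_nnz_prod I d w c l hl.1 hl.2
  have h2 : ∑ l ∈ Finset.Ico d (2 * d - 1), f l ≤ (d - 1) * 4 := by
    refine (Finset.sum_le_card_nsmul _ _ 4 ?_).trans ?_
    · intro l hl
      rw [Finset.mem_Ico] at hl
      exact bsNet_nnz_idle I d w c l (by omega) hl.1
    · rw [Nat.card_Ico, smul_eq_mul]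
      exact Nat.mul_le_mul_right _ (by omega)
  have h0 : f 0 ≤ 3 * d := bsNet_nnz_zero I d w c
  obtain ⟨e, rfl⟩ : ∃ e, d = e + 2 := ⟨d - 2, by omega⟩
  rw [hsplit]
  have e1 : e + 2 - 1 = e + 1 := by omega
  rw [e1] at h1 h2
  have e2 : (e + 2) ^ 2 + 35 * (e + 2) - 36 = e ^ 2 + 39 * e + 38 := by
    have : (e + 2) ^ 2 + 35 * (e + 2) = e ^ 2 + 39 * e + 38 + 36 := by ring
    omega
  rw [e2]
  nlinarith

theorem bsNet_sparsity (I d : ℕ) (w : ℝ) (c : Fin d → ℝ) (α : ℝ) (hα : ⌈α⌉₊ ≤ I) :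
    (bsNet I d w c).Sparsity α := by
  intro l _ i j _ hi
  change (if (i : ℕ) = bsM I l then bsS d l j else 0) = 0
  have : (i : ℕ) ≠ bsM I l := by
    unfold bsM
    split_ifs <;> omega
  rw [if_neg this]

theorem bsNet_width (I d : ℕ) (w : ℝ) (c : Fin d → ℝ) : (bsNet I d w c).width ≤ d + 4 := by
  unfold ResKAN.width
  refine max_le (Finset.sup_le fun l _ => ?_) (by omega)
  change d + 3 ≤ d + 4
  omega

/-- Multi-dimensional cardinal B-spline implementation.
For `I, k ≥ 1`, `d ≥ 2` and `j ∈ ℤ^d`, there is a Res-KAN with spline-order parameter `I`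
(satisfying the sparsity rule for every `α > 0` with `⌈α⌉ ≤ I`), of width at most `d + 4`,
depth `2d - 1`, and at most `d² + 35d - 36` nonzero parameters, exactly implementing
`x ↦ ∏ i, 𝒩_I(2^k x_i − j_i)` on all of `ℝ^d`.  Moreover, the networks can be chosen so
that every layer parameter other than the first affine map's weight matrix and bias
(which have at most `2d` nonzero entries) is independent of `k` and `j`. -/
theorem statement1 (I : ℕ) (hI : 1 ≤ I) (d : ℕ) (hd : 2 ≤ d) :
    ∃ (dims : ℕ → ℕ) (lay : ∀ l : ℕ, ResKANLayer I (dims l) (dims (l + 1)))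
      (Ah : Matrix (Fin 1) (Fin (dims (2 * d - 1))) ℝ) (bh : Fin 1 → ℝ),
      ∀ k : ℕ, 1 ≤ k → ∀ j : Fin d → ℤ,
        ∃ net : ResKAN I d 1,
          net.dims = dims ∧
          net.L = 2 * d - 1 ∧
          -- all layers except the first one are independent of `k` and `j`
          (∀ l : ℕ, 1 ≤ l → HEq (net.layers l) (lay l)) ∧
          HEq net.Ahead Ah ∧ net.bhead = bh ∧
          -- in the first layer, only the affine weights `A` and bias `b` depend on `k, j`
          HEq (net.layers 0).G (lay 0).G ∧ HEq (net.layers 0).β (lay 0).β ∧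
          matNnz (net.layers 0).A + vecNnz (net.layers 0).b ≤ 2 * d ∧
          net.width ≤ d + 4 ∧
          net.depth = 2 * d - 1 ∧
          net.nnz ≤ d ^ 2 + 35 * d - 36 ∧
          (∀ α : ℝ, 0 < α → ⌈α⌉₊ ≤ I → net.Sparsity α) ∧
          ∀ x : Fin d → ℝ,
            net.eval x 0 = ∏ i, cardBSpline I ((2 : ℝ) ^ k * x i - (j i : ℝ)) := by
  refine ⟨bsDims d, (bsNet I d 0 0).layers, (bsNet I d 0 0).Ahead, (bsNet I d 0 0).bhead, ?_⟩
  intro k _ j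
  refine ⟨bsNet I d ((2 : ℝ) ^ k) (fun i => -(j i : ℝ)), rfl, rfl, ?_, HEq.rfl, rfl, HEq.rfl,
    HEq.rfl, bsNet_first _ _ _ _, bsNet_width _ _ _ _, rfl, bsNet_nnz _ _ hd _ _,
    fun α _ hα => bsNet_sparsity _ _ _ _ α hα, ?_⟩
  · intro l hl
    have hl0 : l ≠ 0 := by omega
    refine heq_of_eq ?_
    have hA : bsA d ((2 : ℝ) ^ k) l = bsA d 0 l := by
      funext i i'
      simp [bsA, hl0]
    have hB : bsB d (fun i => -(j i : ℝ)) l = bsB d 0 l := by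
      funext i
      simp [bsB, hl0]
    change natLayer _ _ _ _ _ _ _ _ = natLayer _ _ _ _ _ _ _ _
    rw [hA, hB]
  · intro x
    rw [bsNet_eval I d hd]
    simp only [sub_eq_add_neg]
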